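/- Let K be a number field contained in ℚ(μ_∞) with ring of integers Z_K. The Rouquier ring R_K(y) := Z_K[y, y^{-1}, (y^n − 1)^{-1}_{n ≥ 1}] is a Dedekind domain. -/

import Mathlib

/-- The Rouquier ring `R_K(y) = Z_K[y, y^{-1}, (y^n - 1)^{-1}_{n ≥ 1}]`, realized as the
subring of the rational function field `K(y)` generated by `Z_K`, `y`, `y^{-1}` and the
inverses `(y^n - 1)^{-1}` for `n ≥ 1`. -/
noncomputable def RouquierRing (K : Type*) [Field K] [NumberField K] : Subring (RatFunc K) :=
  Subring.closure
    ((algebraMap K (RatFunc K)) '' Set.range (algebraMap (NumberField.RingOfIntegers K) K)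
      ∪ {RatFunc.X, RatFunc.X⁻¹}
      ∪ {x | ∃ n : ℕ, 0 < n ∧ x = (RatFunc.X ^ n - 1)⁻¹})

lemma rq_int_jacobson : IsJacobsonRing ℤ := by
  rw [isJacobsonRing_iff_prime_eq]
  intro P hP
  by_cases h : P = ⊥
  · subst h
    rw [eq_bot_iff]
    intro x hx
    rw [Ideal.mem_jacobson_bot] at hx
    have h1 := Int.isUnit_iff.mp (hx x)
    rw [Ideal.mem_bot]
    rcases h1 with h1 | h1
    · have : x * x = 0 := by linarith
      simpa using this
    · nlinarith [mul_self_nonneg x]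
  · have := hP.isMaximal h
    exact Ideal.jacobson_eq_self_of_isMaximal

lemma rq_finite_field (F : Type*) [Field F] [Module.Finite ℤ F] : Finite F := by
  have hp : ringChar F ≠ 0 := by
    intro h
    have : CharZero F := (CharP.ringChar_zero_iff_CharZero _).mp h
    have h2 : IsField ℤ := isField_of_isIntegral_of_isField
      (S := F) (FaithfulSMul.algebraMap_injective ℤ F) (Field.toIsField F)
    exact Int.not_isField h2
  have : AddGroup.FG F := Module.Finite.iff_addGroup_fg.mp inferInstance
  apply AddCommGroup.finite_of_fg_isAddTorsion
  intro x
  rw [isOfFinAddOrder_iff_nsmul_eq_zero]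
  refine ⟨ringChar F, Nat.pos_of_ne_zero hp, ?_⟩
  simp [nsmul_eq_mul]

open Polynomial in
lemma rq_exists_pow (A : Type*) [CommRing A] [Algebra.FiniteType ℤ A]
    (Q : Ideal A[X]) (hQ : Q.IsMaximal) (hX : (X : A[X]) ∉ Q) :
    ∃ n : ℕ, 0 < n ∧ (X ^ n - 1 : A[X]) ∈ Q := by
  let _ := Ideal.Quotient.field Q
  have : Algebra.FiniteType ℤ A[X] := Algebra.FiniteType.trans (S := A) inferInstance inferInstance
  have : Algebra.FiniteType ℤ (A[X] ⧸ Q) := inferInstance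
  have := rq_int_jacobson
  have : Module.Finite ℤ (A[X] ⧸ Q) := finite_of_finite_type_of_isJacobsonRing ℤ _
  have : Finite (A[X] ⧸ Q) := rq_finite_field _
  have hx : Ideal.Quotient.mk Q X ≠ 0 := by rwa [Ne, Ideal.Quotient.eq_zero_iff_mem]
  obtain ⟨n, hn, h⟩ := isOfFinOrder_iff_pow_eq_one.mp (isOfFinOrder_of_finite (Units.mk0 _ hx))
  refine ⟨n, hn, ?_⟩
  rw [← Ideal.Quotient.eq_zero_iff_mem]
  have := congrArg Units.val h
  simp only [Units.val_pow_eq_pow_val, Units.val_mk0, Units.val_one] at this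
  simp [this]

lemma rq_maximal (B : Type*) [CommRing B] [IsDomain B] (h : ringKrullDim B ≤ 2)
    (P Q : Ideal B) [hP : P.IsPrime] [hQ : Q.IsPrime] (h0 : P ≠ ⊥) (hPQ : P < Q) :
    Q.IsMaximal := by
  obtain ⟨m, hm, hQm⟩ := Q.exists_le_maximal hQ.ne_top
  rcases hQm.eq_or_lt with rfl | hlt
  · exact hm
  exfalso
  have := hm.isPrime
  let s : LTSeries (PrimeSpectrum B) := ⟨3, ![⊥, ⟨P, hP⟩, ⟨Q, hQ⟩, ⟨m, hm.isPrime⟩], by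
    intro i
    fin_cases i
    · change (⊥ : Ideal B) < P
      exact bot_lt_iff_ne_bot.mpr h0
    · exact hPQ
    · exact hlt⟩
  have h3 : ((3 : ℕ) : WithBot ℕ∞) ≤ 2 := (Order.LTSeries.length_le_krullDim s).trans h
  exact absurd h3 (by decide)

open Polynomial in
noncomputable def rqM (A : Type*) [CommRing A] : Submonoid A[X] :=
  Submonoid.closure ({X} ∪ {x | ∃ n : ℕ, 0 < n ∧ x = X ^ n - 1})

open Polynomial in
/-- dimension part -/
lemma rq_dim (A R : Type*) [CommRing A] [IsDomain A] [IsNoetherianRing A]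
    [Algebra.FiniteType ℤ A] (hA : ringKrullDim A ≤ 1)
    [CommRing R] [IsDomain R] [Algebra A[X] R] [IsLocalization (rqM A) R] :
    Ring.DimensionLEOne R := by
  constructor
  intro p h0 hp
  obtain ⟨m, hm, hpm⟩ := p.exists_le_maximal hp.ne_top
  rcases hpm.eq_or_lt with rfl | hlt
  · exact hm
  exfalso
  have hmp := hm.isPrime
  have hd : ringKrullDim A[X] ≤ 2 := by
    rw [Polynomial.ringKrullDim_of_isNoetherianRing]
    calc ringKrullDim A + 1 ≤ 1 + 1 := by gcongr
      _ = 2 := by norm_num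
  let e := IsLocalization.orderEmbedding (rqM A) R
  have hlt' : p.comap (algebraMap A[X] R) < m.comap (algebraMap A[X] R) := e.lt_iff_lt.mpr hlt
  have h0' : p.comap (algebraMap A[X] R) ≠ ⊥ := by
    intro h
    apply h0
    rw [← IsLocalization.map_under (rqM A) R p, Ideal.under, h, Ideal.map_bot]
  have hdis := ((IsLocalization.isPrime_iff_isPrime_disjoint (rqM A) R m).mp hmp).2
  have hmax := rq_maximal A[X] hd _ _ h0' hlt'
  have hX : (X : A[X]) ∉ m.comap (algebraMap A[X] R) := fun h =>
    Set.disjoint_left.mp hdis (Submonoid.subset_closure (Or.inl rfl)) h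
  obtain ⟨n, hn, h⟩ := rq_exists_pow A _ hmax hX
  exact Set.disjoint_left.mp hdis (Submonoid.subset_closure (Or.inr ⟨n, hn, rfl⟩)) h

open Polynomial in
noncomputable def rqMap (K : Type*) [Field K] [NumberField K] :
    (NumberField.RingOfIntegers K)[X] →+* RatFunc K :=
  (algebraMap K[X] (RatFunc K)).comp (mapRingHom (algebraMap (NumberField.RingOfIntegers K) K))

lemma rqMap_C (K : Type*) [Field K] [NumberField K] (a : NumberField.RingOfIntegers K) :
    rqMap K (Polynomial.C a) = algebraMap K (RatFunc K) (algebraMap _ K a) := by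
  simp [rqMap]

lemma rqMap_X (K : Type*) [Field K] [NumberField K] :
    rqMap K Polynomial.X = RatFunc.X := by
  simp [rqMap]

lemma rqMap_inj (K : Type*) [Field K] [NumberField K] : Function.Injective (rqMap K) := by
  unfold rqMap
  rw [RingHom.coe_comp]
  exact (RatFunc.algebraMap_injective K).comp
    (Polynomial.map_injective _ (FaithfulSMul.algebraMap_injective _ _))

lemma rq_X_mem (K : Type*) [Field K] [NumberField K] : RatFunc.X ∈ RouquierRing K :=
  Subring.subset_closure (Or.inl (Or.inr (Or.inl rfl)))

lemma rqMap_mem (K : Type*) [Field K] [NumberField K] (f) : rqMap K f ∈ RouquierRing K := by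
  induction f using Polynomial.induction_on' with
  | add p q hp hq => rw [map_add]; exact add_mem hp hq
  | monomial n a =>
    rw [← Polynomial.C_mul_X_pow_eq_monomial, map_mul, map_pow, rqMap_C, rqMap_X]
    exact mul_mem (Subring.subset_closure (Or.inl (Or.inl ⟨_, ⟨a, rfl⟩, rfl⟩)))
      (pow_mem (rq_X_mem K) n)

lemma rqM_inv_mem (K : Type*) [Field K] [NumberField K] (f)
    (hf : f ∈ rqM (NumberField.RingOfIntegers K)) :
    rqMap K f ≠ 0 ∧ (rqMap K f)⁻¹ ∈ RouquierRing K := by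
  induction hf using Submonoid.closure_induction with
  | mem x hx =>
    rcases hx with rfl | ⟨n, hn, rfl⟩
    · rw [rqMap_X]
      exact ⟨RatFunc.X_ne_zero, Subring.subset_closure (Or.inl (Or.inr (Or.inr rfl)))⟩
    · constructor
      · rw [Ne, map_eq_zero_iff _ (rqMap_inj K)]
        exact (Polynomial.monic_X_pow_sub_C 1 hn.ne').ne_zero
      · rw [map_sub, map_pow, rqMap_X, map_one]
        exact Subring.subset_closure (Or.inr ⟨n, hn, rfl⟩)
  | one => simp [one_mem]
  | mul x y _ _ hx hy =>
    rw [map_mul, mul_inv]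
    exact ⟨mul_ne_zero hx.1 hy.1, mul_mem hx.2 hy.2⟩

lemma rq_surj (K : Type*) [Field K] [NumberField K] (z) (hz : z ∈ RouquierRing K) :
    ∃ f, ∃ s ∈ rqM (NumberField.RingOfIntegers K), z * rqMap K s = rqMap K f := by
  have hX : Polynomial.X ∈ rqM (NumberField.RingOfIntegers K) :=
    Submonoid.subset_closure (Or.inl rfl)
  unfold RouquierRing at hz
  induction hz using Subring.closure_induction with
  | mem x hx =>
    rcases hx with (⟨_, ⟨a, rfl⟩, rfl⟩ | rfl | rfl) | ⟨n, hn, rfl⟩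
    · exact ⟨Polynomial.C a, 1, one_mem _, by rw [map_one, mul_one, rqMap_C]⟩
    · exact ⟨Polynomial.X, 1, one_mem _, by rw [map_one, mul_one, rqMap_X]⟩
    · exact ⟨1, Polynomial.X, hX, by
        rw [map_one, rqMap_X, inv_mul_cancel₀ RatFunc.X_ne_zero]⟩
    · have hm : (Polynomial.X ^ n - 1) ∈ rqM (NumberField.RingOfIntegers K) :=
        Submonoid.subset_closure (Or.inr ⟨n, hn, rfl⟩)
      refine ⟨1, _, hm, ?_⟩
      have h := (rqM_inv_mem K _ hm).1
      rw [map_sub, map_pow, map_one, rqMap_X] at h ⊢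
      rw [inv_mul_cancel₀ h]
  | zero => exact ⟨0, 1, one_mem _, by simp⟩
  | one => exact ⟨1, 1, one_mem _, by simp⟩
  | add x y _ _ hx hy =>
    obtain ⟨f, s, hs, h1⟩ := hx
    obtain ⟨g, t, ht, h2⟩ := hy
    refine ⟨f * t + g * s, s * t, mul_mem hs ht, ?_⟩
    simp only [map_mul, map_add, ← h1, ← h2]; ring
  | neg x _ hx =>
    obtain ⟨f, s, hs, h1⟩ := hx
    exact ⟨-f, s, hs, by rw [map_neg, ← h1]; ring⟩
  | mul x y _ _ hx hy =>
    obtain ⟨f, s, hs, h1⟩ := hx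
    obtain ⟨g, t, ht, h2⟩ := hy
    refine ⟨f * g, s * t, mul_mem hs ht, ?_⟩
    simp only [map_mul, ← h1, ← h2]; ring

/-- Let `K ⊆ ℚ(μ_∞)` be a number field with ring of integers `Z_K`. The
Rouquier ring `R_K(y) = Z_K[y, y^{-1}, (y^n − 1)^{-1}_{n ≥ 1}]` is a Dedekind domain. -/
theorem rouquierRing_isDedekindDomain (K : Type*) [Field K] [NumberField K]
    (hK : ∃ f : K →+* ℂ, ∀ x : K,
      f x ∈ Subfield.closure {z : ℂ | ∃ n : ℕ, 0 < n ∧ z ^ n = 1}) :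
    IsDedekindDomain (RouquierRing K) := by
  let A := NumberField.RingOfIntegers K
  let φ : Polynomial A →+* RouquierRing K := (rqMap K).codRestrict _ (rqMap_mem K)
  letI : Algebra (Polynomial A) (RouquierRing K) := φ.toAlgebra
  have hφ : ∀ f, ((algebraMap (Polynomial A) (RouquierRing K) f : RouquierRing K) : RatFunc K)
    = rqMap K f := fun f => rfl
  have hinj : Function.Injective (algebraMap (Polynomial A) (RouquierRing K)) := by
    intro f g h
    apply rqMap_inj K
    rw [← hφ, ← hφ, h]
  have hloc : IsLocalization (rqM A) (RouquierRing K) := by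
    refine ⟨?_, ?_, ?_⟩
    · rintro ⟨s, hs⟩
      obtain ⟨h1, h2⟩ := rqM_inv_mem K s hs
      refine IsUnit.of_mul_eq_one ⟨_, h2⟩ ?_
      apply Subtype.ext
      exact mul_inv_cancel₀ h1
    · rintro ⟨z, hz⟩
      obtain ⟨f, s, hs, h⟩ := rq_surj K z hz
      exact ⟨(f, ⟨s, hs⟩), Subtype.ext h⟩
    · intro x y h
      exact ⟨1, by rw [hinj h]⟩
  have hM : rqM A ≤ nonZeroDivisors (Polynomial A) := by
    intro s hs
    rw [mem_nonZeroDivisors_iff_ne_zero]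
    rintro rfl
    exact (rqM_inv_mem K 0 hs).1 (map_zero _)
  have hA : ringKrullDim A ≤ 1 := by
    have : Ring.KrullDimLE 1 A := .mk₁' fun I h0 hI => hI.isMaximal h0
    exact_mod_cast (Ring.krullDimLE_iff (n := 1)).mp this
  have h1 : IsNoetherianRing (RouquierRing K) :=
    IsLocalization.isNoetherianRing (rqM A) _ inferInstance
  have h2 : IsIntegrallyClosed (RouquierRing K) :=
    isIntegrallyClosed_of_isLocalization _ (rqM A) hM
  have : Algebra.FiniteType ℤ A := inferInstance
  have h3 : Ring.DimensionLEOne (RouquierRing K) := rq_dim A _ hA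
  exact { }
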